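/- Let A₁, B, C, D be real matrices of sizes n₁×n₁, n₁×n₂, n₂×n₁, n₂×n₂, let I denote the n₂×n₂ identity, and suppose A = fromBlocks A₁ B C D is invertible. Let K ≥ 1 and δ ≥ 0 satisfy ‖B‖ ≤ K·δ, ‖D − I‖ ≤ K·δ, ‖C‖ ≤ K, and 2K·(2K·‖A⁻¹‖ + 1)·δ ≤ 1 (L∞ operator norms). Then A₁ is invertible, and for all b₁ ∈ ℝ^{n₁}, d ∈ ℝ^{n₂}, setting α = A⁻¹·(Sum.elim b₁ d), α₁ = A₁⁻¹·b₁ and ᾱ = Sum.elim α₁ (d − C·α₁), one has (with sup norms on vectors) ‖α − ᾱ‖ ≤ K·δ·(2K·‖A₁⁻¹‖ + 2)·(‖d‖ + K·‖α₁‖). -/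

import Mathlib

open Matrix

attribute [local instance] Matrix.linftyOpNormedAddCommGroup Matrix.linftyOpNormedRing

/-! With `L = fromBlocks A₁ 0 C 1` one has `ᾱ = L⁻¹ (b₁, d)`, so Adaptive-TFPS solves the full
system with `A` replaced by `L`, where `‖A - L‖ ≤ max ‖B‖ ‖D - 1‖ ≤ K δ`. The resolvent identity
`A⁻¹ - L⁻¹ = A⁻¹ (L - A) L⁻¹` bounds the error by `‖A⁻¹‖ ‖A - L‖ ‖ᾱ‖`, and when
`‖A⁻¹‖ ‖A - L‖ < 1` it also gives `‖A⁻¹‖ ≤ 2 ‖L⁻¹‖`. The explicit block form of `L⁻¹` then yields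
`‖L⁻¹‖ ≤ K ‖A₁⁻¹‖ + 1`. -/

section BlockNorms

variable {l m n o E : Type*} [Fintype l] [Fintype m] [Fintype n] [Fintype o]
  [NormedAddCommGroup E]

theorem norm_sumElim (u : m → E) (v : n → E) : ‖Sum.elim u v‖ = max ‖u‖ ‖v‖ := by
  refine le_antisymm ?_ (max_le ?_ ?_)
  · refine (pi_norm_le_iff_of_nonneg (by positivity)).2 ?_
    rintro (i | j)
    · exact le_max_of_le_left (norm_le_pi_norm u i)
    · exact le_max_of_le_right (norm_le_pi_norm v j)
  · exact (pi_norm_le_iff_of_nonneg (norm_nonneg _)).2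
      fun i => norm_le_pi_norm (Sum.elim u v) (Sum.inl i)
  · exact (pi_norm_le_iff_of_nonneg (norm_nonneg _)).2
      fun j => norm_le_pi_norm (Sum.elim u v) (Sum.inr j)

theorem sum_nnnorm_row_le_linfty_opNNNorm (A : Matrix m n E) (i : m) : ∑ j, ‖A i j‖₊ ≤ ‖A‖₊ := by
  rw [linfty_opNNNorm_def]
  exact Finset.le_sup (f := fun i => ∑ j, ‖A i j‖₊) (Finset.mem_univ i)

theorem linfty_opNorm_fromBlocks_le (A : Matrix n l E) (B : Matrix n m E) (C : Matrix o l E)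
    (D : Matrix o m E) : ‖fromBlocks A B C D‖ ≤ max (‖A‖ + ‖B‖) (‖C‖ + ‖D‖) := by
  suffices h : ‖fromBlocks A B C D‖₊ ≤ max (‖A‖₊ + ‖B‖₊) (‖C‖₊ + ‖D‖₊) from mod_cast h
  rw [linfty_opNNNorm_def]
  refine Finset.sup_le ?_
  rintro (i | i) - <;> rw [Fintype.sum_sum_type]
  · exact le_max_of_le_left (add_le_add (sum_nnnorm_row_le_linfty_opNNNorm A i)
      (sum_nnnorm_row_le_linfty_opNNNorm B i))
  · exact le_max_of_le_right (add_le_add (sum_nnnorm_row_le_linfty_opNNNorm C i)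
      (sum_nnnorm_row_le_linfty_opNNNorm D i))

theorem linfty_opNorm_one_le_one {R : Type*} [NormedRing R] [NormOneClass R] [DecidableEq n] :
    ‖(1 : Matrix n n R)‖ ≤ 1 := by
  rw [← diagonal_one, linfty_opNorm_diagonal]
  exact (pi_norm_const_le (1 : R)).trans_eq norm_one

theorem norm_sumElim_sub_mulVec_le {R : Type*} [NormedRing R] {C : Matrix n m R} {K : ℝ}
    (hK : 1 ≤ K) (hC : ‖C‖ ≤ K) (x : m → R) (d : n → R) :
    ‖Sum.elim x (d - C *ᵥ x)‖ ≤ ‖d‖ + K * ‖x‖ := by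
  rw [norm_sumElim]
  refine max_le ?_ ((norm_sub_le _ _).trans ?_)
  · exact le_add_of_nonneg_of_le (norm_nonneg d) (le_mul_of_one_le_left (norm_nonneg x) hK)
  · gcongr
    exact (linfty_opNorm_mulVec C x).trans (by gcongr)

end BlockNorms

section Perturbation

variable {n 𝕜 : Type*} [Fintype n] [DecidableEq n] [NormedField 𝕜] {A L : Matrix n n 𝕜}

-- Injectivity replaces the Neumann series, which may diverge over an incomplete `𝕜`.
theorem isUnit_of_norm_inv_mul_norm_sub_lt_one (hA : IsUnit A) (h : ‖A⁻¹‖ * ‖A - L‖ < 1) :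
    IsUnit L := by
  rw [← mulVec_injective_iff_isUnit]
  refine (injective_iff_map_eq_zero L.mulVecLin).2 fun v (hv : L *ᵥ v = 0) => ?_
  have fixed : A⁻¹ *ᵥ ((A - L) *ᵥ v) = v := by
    rw [sub_mulVec, hv, sub_zero, mulVec_mulVec,
      nonsing_inv_mul A ((isUnit_iff_isUnit_det A).1 hA), one_mulVec]
  have contraction : ‖v‖ ≤ ‖A⁻¹‖ * ‖A - L‖ * ‖v‖ :=
    calc ‖v‖ = ‖A⁻¹ *ᵥ ((A - L) *ᵥ v)‖ := by rw [fixed]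
      _ ≤ ‖A⁻¹‖ * ‖(A - L) *ᵥ v‖ := linfty_opNorm_mulVec _ _
      _ ≤ ‖A⁻¹‖ * (‖A - L‖ * ‖v‖) := by gcongr; exact linfty_opNorm_mulVec _ _
      _ = ‖A⁻¹‖ * ‖A - L‖ * ‖v‖ := (mul_assoc _ _ _).symm
  by_contra hv0
  exact contraction.not_gt (mul_lt_of_lt_one_left (norm_pos_iff.2 hv0) h)

theorem norm_inv_le_two_mul_norm_inv (hA : IsUnit A) (h : ‖A⁻¹‖ * ‖A - L‖ < 1) :
    ‖A⁻¹‖ ≤ 2 * ‖L⁻¹‖ := by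
  have hL := isUnit_of_norm_inv_mul_norm_sub_lt_one hA h
  calc ‖A⁻¹‖ = ‖A⁻¹ * (L - A) * L⁻¹ + L⁻¹‖ := by
        rw [← Matrix.inv_sub_inv (iff_of_true hA hL), sub_add_cancel]
    _ ≤ ‖A⁻¹‖ * ‖L - A‖ * ‖L⁻¹‖ + ‖L⁻¹‖ := by
        refine (norm_add_le _ _).trans ?_
        gcongr
        exact norm_mul₃_le
    _ ≤ 1 * ‖L⁻¹‖ + ‖L⁻¹‖ := by
        rw [norm_sub_rev]
        gcongr
    _ = 2 * ‖L⁻¹‖ := by ring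

theorem norm_inv_mulVec_sub_inv_mulVec_le (hA : IsUnit A) (h : ‖A⁻¹‖ * ‖A - L‖ < 1) (b : n → 𝕜) :
    ‖A⁻¹ *ᵥ b - L⁻¹ *ᵥ b‖ ≤ ‖A - L‖ * (2 * ‖L⁻¹‖) * ‖L⁻¹ *ᵥ b‖ := by
  have hL := isUnit_of_norm_inv_mul_norm_sub_lt_one hA h
  calc ‖A⁻¹ *ᵥ b - L⁻¹ *ᵥ b‖ = ‖(A⁻¹ * (L - A)) *ᵥ (L⁻¹ *ᵥ b)‖ := by
        rw [← sub_mulVec, Matrix.inv_sub_inv (iff_of_true hA hL), mulVec_mulVec]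
    _ ≤ ‖A⁻¹ * (L - A)‖ * ‖L⁻¹ *ᵥ b‖ := linfty_opNorm_mulVec _ _
    _ ≤ ‖A⁻¹‖ * ‖L - A‖ * ‖L⁻¹ *ᵥ b‖ := by gcongr; exact norm_mul_le _ _
    _ = ‖A - L‖ * ‖A⁻¹‖ * ‖L⁻¹ *ᵥ b‖ := by rw [norm_sub_rev, mul_comm ‖A⁻¹‖]
    _ ≤ ‖A - L‖ * (2 * ‖L⁻¹‖) * ‖L⁻¹ *ᵥ b‖ := by
        gcongr
        exact norm_inv_le_two_mul_norm_inv hA h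

end Perturbation

section AdaptiveMatrix

variable {m n R : Type*} [DecidableEq n]

/-- The matrix of the extended Adaptive-TFPS system: the compressed system `A₁ x₁ = b₁`, with the
discarded unknowns recovered from `C x₁ + x₂ = d`. -/
def adaptiveMatrix [Zero R] [One R] (A₁ : Matrix m m R) (C : Matrix n m R) :
    Matrix (m ⊕ n) (m ⊕ n) R :=
  fromBlocks A₁ 0 C 1

variable [Fintype m] [Fintype n]

theorem linfty_opNorm_fromBlocks_sub_adaptiveMatrix_le [NormedRing R] (A₁ : Matrix m m R)
    (B : Matrix m n R) (C : Matrix n m R) (D : Matrix n n R) :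
    ‖fromBlocks A₁ B C D - adaptiveMatrix A₁ C‖ ≤ max ‖B‖ ‖D - 1‖ := by
  have hsub : fromBlocks A₁ B C D - adaptiveMatrix A₁ C = fromBlocks 0 B 0 (D - 1) := by
    simp [adaptiveMatrix, sub_eq_add_neg, fromBlocks_neg, fromBlocks_add]
  rw [hsub]
  refine (linfty_opNorm_fromBlocks_le _ _ _ _).trans_eq ?_
  rw [norm_zero, norm_zero, zero_add, zero_add]

variable [DecidableEq m]

theorem isUnit_adaptiveMatrix_iff [CommRing R] {A₁ : Matrix m m R} {C : Matrix n m R} :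
    IsUnit (adaptiveMatrix A₁ C) ↔ IsUnit A₁ := by
  rw [adaptiveMatrix, isUnit_fromBlocks_zero₁₂, and_iff_left isUnit_one]

theorem inv_adaptiveMatrix [CommRing R] {A₁ : Matrix m m R} (hA₁ : IsUnit A₁)
    (C : Matrix n m R) : (adaptiveMatrix A₁ C)⁻¹ = fromBlocks A₁⁻¹ 0 (-(C * A₁⁻¹)) 1 := by
  rw [adaptiveMatrix, inv_fromBlocks_zero₁₂_of_isUnit_iff A₁ C 1 (iff_of_true hA₁ isUnit_one),
    inv_one, Matrix.one_mul]

theorem inv_adaptiveMatrix_mulVec_sumElim [CommRing R] {A₁ : Matrix m m R} (hA₁ : IsUnit A₁)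
    (C : Matrix n m R) (b : m → R) (d : n → R) :
    (adaptiveMatrix A₁ C)⁻¹ *ᵥ Sum.elim b d =
      Sum.elim (A₁⁻¹ *ᵥ b) (d - C *ᵥ (A₁⁻¹ *ᵥ b)) := by
  rw [inv_adaptiveMatrix hA₁, fromBlocks_mulVec]
  simp [neg_mulVec, neg_add_eq_sub]

theorem linfty_opNorm_inv_adaptiveMatrix_le [NormedCommRing R] [NormOneClass R]
    {A₁ : Matrix m m R} {C : Matrix n m R} {K : ℝ} (hA₁ : IsUnit A₁) (hK : 1 ≤ K)
    (hC : ‖C‖ ≤ K) : ‖(adaptiveMatrix A₁ C)⁻¹‖ ≤ K * ‖A₁⁻¹‖ + 1 := by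
  rw [inv_adaptiveMatrix hA₁]
  refine (linfty_opNorm_fromBlocks_le _ _ _ _).trans (max_le ?_ ?_)
  · rw [norm_zero]
    exact add_le_add (le_mul_of_one_le_left (norm_nonneg _) hK) zero_le_one
  · rw [norm_neg]
    have hCA₁ : ‖C * A₁⁻¹‖ ≤ K * ‖A₁⁻¹‖ := (linfty_opNorm_mul C A₁⁻¹).trans (by gcongr)
    exact add_le_add hCA₁ linfty_opNorm_one_le_one

end AdaptiveMatrix

theorem a_posteriori_coefficient_error_bound_general
    {m n 𝕜 : Type*} [Fintype m] [DecidableEq m] [Fintype n] [DecidableEq n] [NormedField 𝕜]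
    {A₁ : Matrix m m 𝕜} {B : Matrix m n 𝕜} {C : Matrix n m 𝕜} {D : Matrix n n 𝕜} {K ε : ℝ}
    (hA : IsUnit (fromBlocks A₁ B C D))
    (hK : 1 ≤ K) (hB : ‖B‖ ≤ ε) (hD : ‖D - 1‖ ≤ ε) (hC : ‖C‖ ≤ K)
    (hsmall : ‖(fromBlocks A₁ B C D)⁻¹‖ * ε < 1) :
    IsUnit A₁ ∧
      ∀ (b₁ : m → 𝕜) (d : n → 𝕜),
        ‖(fromBlocks A₁ B C D)⁻¹ *ᵥ Sum.elim b₁ d -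
            Sum.elim (A₁⁻¹ *ᵥ b₁) (d - C *ᵥ (A₁⁻¹ *ᵥ b₁))‖ ≤
          ε * (2 * K * ‖A₁⁻¹‖ + 2) * (‖d‖ + K * ‖A₁⁻¹ *ᵥ b₁‖) := by
  have hAL : ‖fromBlocks A₁ B C D - adaptiveMatrix A₁ C‖ ≤ ε :=
    (linfty_opNorm_fromBlocks_sub_adaptiveMatrix_le A₁ B C D).trans (max_le hB hD)
  have hpert : ‖(fromBlocks A₁ B C D)⁻¹‖ * ‖fromBlocks A₁ B C D - adaptiveMatrix A₁ C‖ < 1 :=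
    (mul_le_mul_of_nonneg_left hAL (norm_nonneg _)).trans_lt hsmall
  have hA₁ : IsUnit A₁ :=
    isUnit_adaptiveMatrix_iff.1 (isUnit_of_norm_inv_mul_norm_sub_lt_one hA hpert)
  have hε : 0 ≤ ε := (norm_nonneg B).trans hB
  have hLinv : 2 * ‖(adaptiveMatrix A₁ C)⁻¹‖ ≤ 2 * K * ‖A₁⁻¹‖ + 2 := by
    linarith [linfty_opNorm_inv_adaptiveMatrix_le hA₁ hK hC]
  refine ⟨hA₁, fun b₁ d => ?_⟩
  rw [← inv_adaptiveMatrix_mulVec_sumElim hA₁]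
  refine (norm_inv_mulVec_sub_inv_mulVec_le hA hpert _).trans ?_
  rw [inv_adaptiveMatrix_mulVec_sumElim hA₁]
  gcongr
  exact norm_sumElim_sub_mulVec_le hK hC _ d

/-- Let `A₁, B, C, D` be real matrices of sizes `n₁ × n₁`, `n₁ × n₂`, `n₂ × n₁`, `n₂ × n₂`, and
suppose `A = fromBlocks A₁ B C D` is invertible. Let `K ≥ 1` and `δ ≥ 0` satisfy `‖B‖ ≤ K·δ`,
`‖D − 1‖ ≤ K·δ`, `‖C‖ ≤ K`, and `2K(2K‖A⁻¹‖ + 1)δ ≤ 1` (L∞ operator norms). Then `A₁` is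
invertible, and for all `b₁ ∈ ℝ^{n₁}`, `d ∈ ℝ^{n₂}`, setting `α = A⁻¹ *ᵥ (Sum.elim b₁ d)`,
`α₁ = A₁⁻¹ *ᵥ b₁` and `ᾱ = Sum.elim α₁ (d - C *ᵥ α₁)`, one has (sup norms on vectors)
`‖α − ᾱ‖ ≤ K·δ·(2K‖A₁⁻¹‖ + 2)·(‖d‖ + K‖α₁‖)`. -/
theorem a_posteriori_coefficient_error_bound
    (n₁ n₂ : ℕ)
    (A₁ : Matrix (Fin n₁) (Fin n₁) ℝ) (B : Matrix (Fin n₁) (Fin n₂) ℝ)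
    (C : Matrix (Fin n₂) (Fin n₁) ℝ) (D : Matrix (Fin n₂) (Fin n₂) ℝ)
    (hA : IsUnit (Matrix.fromBlocks A₁ B C D))
    (K δ : ℝ) (hK : 1 ≤ K) (hδ : 0 ≤ δ)
    (hB : ‖B‖ ≤ K * δ) (hD : ‖D - 1‖ ≤ K * δ) (hC : ‖C‖ ≤ K)
    (hsmall : 2 * K * (2 * K * ‖(Matrix.fromBlocks A₁ B C D)⁻¹‖ + 1) * δ ≤ 1) :
    IsUnit A₁ ∧
      ∀ (b₁ : Fin n₁ → ℝ) (d : Fin n₂ → ℝ),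
        ‖(Matrix.fromBlocks A₁ B C D)⁻¹ *ᵥ (Sum.elim b₁ d) -
            Sum.elim (A₁⁻¹ *ᵥ b₁) (d - C *ᵥ (A₁⁻¹ *ᵥ b₁))‖ ≤
          K * δ * (2 * K * ‖A₁⁻¹‖ + 2) * (‖d‖ + K * ‖A₁⁻¹ *ᵥ b₁‖) := by
  have hKinv : 0 ≤ (K - 1) * (K * δ * ‖(fromBlocks A₁ B C D)⁻¹‖) :=
    mul_nonneg (sub_nonneg.2 hK) (by positivity)
  exact a_posteriori_coefficient_error_bound_general hA hK hB hD hC (by nlinarith)
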